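/- Let E be a lattice effect algebra and define x·y := ((x'∧y)⊕y')' for all x,y ∈ E. Then for all a, b ∈ E: a·(b'·a)' = (b'·a)'·a and (b'·a)'·a = (a'·b)'·b (i.e., the identities (NG6) hold in (E;·,',0,1)). -/

import Mathlib

/-- An effect algebra: a partial algebra (E;⊕,',0,1). The partial operation ⊕ is
modeled by a definedness predicate `D` together with a total function `add` whose
value is only meaningful on defined pairs. -/
structure EffectAlgebra (E : Type*) where
  /-- definedness of `x ⊕ y` -/
  D : E → E → Prop
  /-- the value of `x ⊕ y` (meaningful only when `D x y`) -/
  add : E → E → E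
  zero : E
  one : E
  /-- the complement `x'` -/
  compl : E → E
  /-- (E1) commutativity -/
  E1 : ∀ x y, D x y → D y x ∧ add x y = add y x
  /-- (E2) associativity -/
  E2 : ∀ x y z, D x y → D (add x y) z →
    D y z ∧ D x (add y z) ∧ add (add x y) z = add x (add y z)
  /-- (E3) existence of the complement -/
  E3a : ∀ x, D x (compl x)
  E3b : ∀ x, add x (compl x) = one
  /-- (E3) uniqueness of the complement -/
  E3c : ∀ x y, D x y → add x y = one → y = compl x
  /-- (E4) -/
  E4 : ∀ x, D x one → x = zero

/-- The induced order of an effect algebra: `a ≤ b` iff `a ⊕ c = b` for some `c`. -/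
def EffectAlgebra.le {E : Type*} (A : EffectAlgebra E) (a b : E) : Prop :=
  ∃ c, A.D a c ∧ A.add a c = b

/-- A lattice effect algebra: an effect algebra whose induced order is a lattice,
with meet `inf` and join `sup`. -/
structure LatticeEffectAlgebra (E : Type*) extends EffectAlgebra E where
  inf : E → E → E
  sup : E → E → E
  inf_le_left : ∀ a b, toEffectAlgebra.le (inf a b) a
  inf_le_right : ∀ a b, toEffectAlgebra.le (inf a b) b
  le_inf : ∀ a b c, toEffectAlgebra.le c a → toEffectAlgebra.le c b →
    toEffectAlgebra.le c (inf a b)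
  le_sup_left : ∀ a b, toEffectAlgebra.le a (sup a b)
  le_sup_right : ∀ a b, toEffectAlgebra.le b (sup a b)
  sup_le : ∀ a b c, toEffectAlgebra.le a c → toEffectAlgebra.le b c →
    toEffectAlgebra.le (sup a b) c

/-- The total operation `x·y := ((x'∧y)⊕y')'` on a lattice effect algebra
(well defined since `x'∧y ≤ y`). -/
def LatticeEffectAlgebra.prod {E : Type*} (A : LatticeEffectAlgebra E) (x y : E) : E :=
  A.compl (A.add (A.inf (A.compl x) y) (A.compl y))

/-!
Write `y ⊖ x` for the `c` with `x ⊕ c = y`. Then `x·y = y ⊖ (x' ∧ y)`, and if `x ≤ y` then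
`x'·y = y·x' = y ⊖ x`. So `d := b'·a = a ⊖ (b ∧ a)` satisfies `d ≤ a` and
`d'·a = a·d' = a ⊖ d = b ∧ a`, which is symmetric in `a` and `b`.
-/

namespace EffectAlgebra

variable {E : Type*} (A : EffectAlgebra E) {x y z : E}

lemma D_symm (h : A.D x y) : A.D y x :=
  (A.E1 x y h).1

protected lemma add_comm (h : A.D x y) : A.add x y = A.add y x :=
  (A.E1 x y h).2

protected lemma compl_compl (x : E) : A.compl (A.compl x) = x := by
  have hD : A.D x (A.compl x) := A.E3a x
  exact (A.E3c _ _ (A.D_symm hD) ((A.add_comm hD).symm.trans (A.E3b x))).symm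

lemma D_compl_add (h : A.D x y) : A.D x (A.compl (A.add x y)) := by
  rw [A.add_comm h]
  exact (A.E2 y x _ (A.D_symm h) (A.E3a _)).1

lemma add_compl_add (h : A.D x y) : A.add x (A.compl (A.add x y)) = A.compl y := by
  rw [A.add_comm h]
  obtain ⟨-, hD, hassoc⟩ := A.E2 y x _ (A.D_symm h) (A.E3a _)
  exact A.E3c _ _ hD (hassoc.symm.trans (A.E3b _))

lemma compl_one : A.compl A.one = A.zero :=
  A.E4 _ (A.D_symm (A.E3a A.one))

lemma D_zero (x : E) : A.D x A.zero := by
  simpa only [A.E3b, A.compl_one] using A.D_compl_add (A.E3a x)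

protected lemma add_zero (x : E) : A.add x A.zero = x := by
  simpa only [A.E3b, A.compl_one, A.compl_compl] using A.add_compl_add (A.E3a x)

lemma eq_zero_of_add_eq_zero_right (h : A.D x y) (hxy : A.add x y = A.zero) : y = A.zero := by
  have hone : A.D (A.add x y) A.one := hxy ▸ A.D_symm (A.D_zero A.one)
  exact A.E4 y (A.E2 x y A.one h hone).1

/-- The partial difference `y ⊖ x`, i.e. the `c` with `x ⊕ c = y`, encoded as the total operation
`(x ⊕ y')'`. Its value is meaningful only when `x ≤ y`. -/
def sub (y x : E) : E :=
  A.compl (A.add x (A.compl y))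

protected lemma add_sub_cancel_left (h : A.D x y) : A.sub (A.add x y) x = y := by
  rw [sub, A.add_compl_add h, A.compl_compl]

protected lemma add_left_cancel (hy : A.D x y) (hz : A.D x z) (h : A.add x y = A.add x z) :
    y = z := by
  rw [← A.add_sub_cancel_left hy, h, A.add_sub_cancel_left hz]

protected lemma le_refl (x : E) : A.le x x :=
  ⟨A.zero, A.D_zero x, A.add_zero x⟩

protected lemma le_antisymm (hxy : A.le x y) (hyx : A.le y x) : x = y := by
  obtain ⟨c, hc, rfl⟩ := hxy
  obtain ⟨d, hd, hx⟩ := hyx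
  obtain ⟨hcd, hxcd, hassoc⟩ := A.E2 x c d hc hd
  have hcd_zero : A.add c d = A.zero :=
    A.add_left_cancel hxcd (A.D_zero x) (by rw [← hassoc, hx, A.add_zero])
  rw [A.eq_zero_of_add_eq_zero_right hcd hcd_zero, A.add_zero] at hx
  exact hx.symm

lemma D_compl_of_le (h : A.le x y) : A.D x (A.compl y) := by
  obtain ⟨c, hc, rfl⟩ := h
  exact A.D_compl_add hc

protected lemma compl_le_compl (h : A.le x y) : A.le (A.compl y) (A.compl x) := by
  obtain ⟨c, hc, rfl⟩ := h
  have hc' : A.D c x := A.D_symm hc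
  rw [A.add_comm hc]
  refine ⟨c, A.D_symm (A.D_compl_add hc'), ?_⟩
  rw [← A.add_comm (A.D_compl_add hc'), A.add_compl_add hc']

protected lemma sub_le (h : A.le x y) : A.le (A.sub y x) y := by
  obtain ⟨c, hc, rfl⟩ := h
  rw [A.add_sub_cancel_left hc]
  exact ⟨x, A.D_symm hc, (A.add_comm hc).symm⟩

protected lemma sub_sub_cancel (h : A.le x y) : A.sub y (A.sub y x) = x := by
  obtain ⟨c, hc, rfl⟩ := h
  rw [A.add_sub_cancel_left hc, A.add_comm hc, A.add_sub_cancel_left (A.D_symm hc)]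

lemma compl_sub_compl (h : A.le x y) : A.sub (A.compl x) (A.compl y) = A.sub y x := by
  rw [sub, sub, A.compl_compl, A.add_comm (A.D_compl_of_le h)]

end EffectAlgebra

namespace LatticeEffectAlgebra

variable {E : Type*} (A : LatticeEffectAlgebra E) {x y : E}

protected lemma inf_comm (x y : E) : A.inf x y = A.inf y x :=
  A.le_antisymm (A.le_inf _ _ _ (A.inf_le_right _ _) (A.inf_le_left _ _))
    (A.le_inf _ _ _ (A.inf_le_right _ _) (A.inf_le_left _ _))

lemma inf_eq_left_of_le (h : A.le x y) : A.inf x y = x :=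
  A.le_antisymm (A.inf_le_left _ _) (A.le_inf _ _ _ (A.le_refl x) h)

lemma prod_eq_sub_inf (x y : E) : A.prod x y = A.sub y (A.inf (A.compl x) y) :=
  rfl

lemma prod_compl_left_eq_sub_inf (x y : E) : A.prod (A.compl x) y = A.sub y (A.inf x y) := by
  rw [prod_eq_sub_inf, A.compl_compl]

lemma prod_compl_left_of_le (h : A.le x y) : A.prod (A.compl x) y = A.sub y x := by
  rw [prod_compl_left_eq_sub_inf, A.inf_eq_left_of_le h]

lemma prod_compl_right_of_le (h : A.le x y) : A.prod y (A.compl x) = A.sub y x := by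
  rw [prod_eq_sub_inf, A.inf_eq_left_of_le (A.compl_le_compl h), A.compl_sub_compl h]

lemma prod_compl_left_le (x y : E) : A.le (A.prod (A.compl x) y) y := by
  rw [prod_compl_left_eq_sub_inf]
  exact A.sub_le (A.inf_le_right x y)

lemma sub_prod_compl_left (x y : E) : A.sub y (A.prod (A.compl x) y) = A.inf x y := by
  rw [prod_compl_left_eq_sub_inf, A.sub_sub_cancel (A.inf_le_right x y)]

lemma prod_compl_prod_right_eq_inf (x y : E) :
    A.prod y (A.compl (A.prod (A.compl x) y)) = A.inf x y := by
  rw [A.prod_compl_right_of_le (A.prod_compl_left_le x y), sub_prod_compl_left]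

lemma prod_compl_prod_left_eq_inf (x y : E) :
    A.prod (A.compl (A.prod (A.compl x) y)) y = A.inf x y := by
  rw [A.prod_compl_left_of_le (A.prod_compl_left_le x y), sub_prod_compl_left]

end LatticeEffectAlgebra

/-- (NG6) holds in `(E;·,',0,1)` for a lattice effect algebra `E` with
`x·y := ((x'∧y)⊕y')'`: `a·(b'·a)' = (b'·a)'·a` and `(b'·a)'·a = (a'·b)'·b`. -/
theorem ng6_holds {E : Type*} (A : LatticeEffectAlgebra E) (a b : E) :
    A.prod a (A.compl (A.prod (A.compl b) a)) = A.prod (A.compl (A.prod (A.compl b) a)) a ∧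
    A.prod (A.compl (A.prod (A.compl b) a)) a = A.prod (A.compl (A.prod (A.compl a) b)) b := by
  constructor
  · rw [A.prod_compl_prod_right_eq_inf, A.prod_compl_prod_left_eq_inf]
  · rw [A.prod_compl_prod_left_eq_inf, A.prod_compl_prod_left_eq_inf, A.inf_comm]
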